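/- For every element h ∈ G, the conjugate subgroup h(Π ∩ G₀)h⁻¹ is contained in Π. In particular, h(Π ∩ G₀)h⁻¹ = Π ∩ G₀ for every h ∈ G₀. -/

import Mathlib

/-!
The theorem follows from the existence of a finite quotient `G → Q`, here a permutation group on
`31` points, whose kernel `N` satisfies `Π ∩ G₀ ≤ N ≤ Π`: since `N` is normal, every conjugate of
`Π ∩ G₀` lies in `N`, hence in `Π`. The equality for `h ∈ G₀` is the inclusion applied to `h` and
to `h⁻¹`.

*`Π ∩ G₀ ≤ N`* (`toPerm_eq_one`). The generators of `Π` map to `d`, `c`, `c⁻¹` with `c` of order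
`7` and `d` of order `3`, and the image of `Π` lies in the set of the `21` permutations `cⁱdᵏ`
(`inA_of_mem`). The element `v` is central in `G₀`, because it commutes with `b` and `j`, and the
only `cⁱdᵏ` commuting with the image of `v` is the identity (`inA_commute`).

*`N ≤ Π`* (`mem_of_toPerm_eq_one`). This needs an upper bound for the index of `Π`, namely a list of
`864` elements that meets every right coset of `Π` (`exists_rep`). Given such a list, an element of
`N` in the coset of the representative `r` shows that the image of `r` is some `cⁱdᵏ`; all `cⁱdᵏ`
preserve a certain set of `8` points, and `r = 1` is the only representative that does
(`fixedSet_check`).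

The list comes from a coset enumeration. The subgroup `⟨u, v⟩` is finite of order `288`, with `j`
central of order `12`, and its elements have normal forms `jᵃ m vᵉ` for six choices of `m`. The
representatives are these normal forms preceded by `1`, `j⁻¹ub` or `b`, so that right multiplication
by `u` and `v` is computed by the normal forms. Right multiplication by `b` is given by a table
(`bTable`). Five entries of the table express the choice of the representatives and the membership
of `a₁`, `a₂`, `a₃` in `Π`; each of the others is deduced from entries of smaller rank by one of the
relators `b³`, `(buv)³`, `(buvu)²v` (`table_check`, `good_of_rank_lt`).
-/

/-- Generators of the Cartwright–Steger lattice presentation. -/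
inductive CSgen : Type
  | u : CSgen
  | v : CSgen
  | b : CSgen

open FreeGroup in
/-- Relators of the Cartwright–Steger lattice:
`u³ = v⁴ = b³ = 1`, `(uv)² = (vu)²`, `vb = bv`, `(buv)³ = 1`, `(buvu)²v = 1`. -/
def csRels : Set (FreeGroup CSgen) :=
  { (of CSgen.u) ^ 3,
    (of CSgen.v) ^ 4,
    (of CSgen.b) ^ 3,
    (of CSgen.u * of CSgen.v) ^ 2 * ((of CSgen.v * of CSgen.u) ^ 2)⁻¹,
    of CSgen.v * of CSgen.b * (of CSgen.b * of CSgen.v)⁻¹,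
    (of CSgen.b * of CSgen.u * of CSgen.v) ^ 3,
    (of CSgen.b * of CSgen.u * of CSgen.v * of CSgen.u) ^ 2 * of CSgen.v }

/-- The Cartwright–Steger lattice, as an abstract presented group. -/
abbrev CS : Type := PresentedGroup csRels

def gu : CS := PresentedGroup.of CSgen.u
def gv : CS := PresentedGroup.of CSgen.v
def gb : CS := PresentedGroup.of CSgen.b
/-- `j = (uv)²`. -/
def gj : CS := (gu * gv) ^ 2

/-- `a₁ = vuv⁻¹j⁴buvj²`. -/
def a1 : CS := gv * gu * gv⁻¹ * gj ^ 4 * gb * gu * gv * gj ^ 2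
/-- `a₂ = v²ubuv⁻¹uv²j`. -/
def a2 : CS := gv ^ 2 * gu * gb * gu * gv⁻¹ * gu * gv ^ 2 * gj
/-- `a₃ = u⁻¹v²uj⁹bv⁻¹uv⁻¹j⁸`. -/
def a3 : CS := gu⁻¹ * gv ^ 2 * gu * gj ^ 9 * gb * gv⁻¹ * gu * gv⁻¹ * gj ^ 8

/-- The subgroup `Π` generated by `a₁`, `a₂`, `a₃`. -/
def PiGrp : Subgroup CS := Subgroup.closure {a1, a2, a3}

lemma a1_mem : a1 ∈ PiGrp := Subgroup.subset_closure (Set.mem_insert _ _)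
lemma a2_mem : a2 ∈ PiGrp :=
  Subgroup.subset_closure (Set.mem_insert_of_mem _ (Set.mem_insert _ _))
lemma a3_mem : a3 ∈ PiGrp :=
  Subgroup.subset_closure (Set.mem_insert_of_mem _ (Set.mem_insert_of_mem _ (Set.mem_singleton _)))

/-- The subgroup `G₀` generated by `(jb)⁻¹`, `b`, `j` and `v`
(the stabilizer of the mirror `M₀`). -/
def G0 : Subgroup CS := Subgroup.closure {(gj * gb)⁻¹, gb, gj, gv}

lemma G0_mem_s2 : (gj * gb)⁻¹ ∈ G0 := Subgroup.subset_closure (Set.mem_insert _ _)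
lemma G0_mem_b : gb ∈ G0 :=
  Subgroup.subset_closure (Set.mem_insert_of_mem _ (Set.mem_insert _ _))
lemma G0_mem_j : gj ∈ G0 :=
  Subgroup.subset_closure
    (Set.mem_insert_of_mem _ (Set.mem_insert_of_mem _ (Set.mem_insert _ _)))
lemma G0_mem_v : gv ∈ G0 :=
  Subgroup.subset_closure
    (Set.mem_insert_of_mem _ (Set.mem_insert_of_mem _
      (Set.mem_insert_of_mem _ (Set.mem_singleton _))))

/-! ### Relations in the lattice -/

lemma gu_cube : gu ^ 3 = 1 := by
  have h := PresentedGroup.one_of_mem (rels := csRels) (x := FreeGroup.of CSgen.u ^ 3)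
    (by simp [csRels])
  simp only [map_pow] at h
  exact h

lemma gv_four : gv ^ 4 = 1 := by
  have h := PresentedGroup.one_of_mem (rels := csRels) (x := FreeGroup.of CSgen.v ^ 4)
    (by simp [csRels])
  simp only [map_pow] at h
  exact h

lemma gb_cube : gb ^ 3 = 1 := by
  have h := PresentedGroup.one_of_mem (rels := csRels) (x := FreeGroup.of CSgen.b ^ 3)
    (by simp [csRels])
  simp only [map_pow] at h
  exact h

lemma gu_gv_braid : (gu * gv) ^ 2 = (gv * gu) ^ 2 := by
  have h := PresentedGroup.mk_eq_mk_of_mul_inv_mem (rels := csRels)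
    (x := (FreeGroup.of CSgen.u * FreeGroup.of CSgen.v) ^ 2)
    (y := (FreeGroup.of CSgen.v * FreeGroup.of CSgen.u) ^ 2) (by simp [csRels])
  simp only [map_pow, map_mul] at h
  exact h

lemma gv_gb_comm : gv * gb = gb * gv := by
  have h := PresentedGroup.mk_eq_mk_of_mul_inv_mem (rels := csRels)
    (x := FreeGroup.of CSgen.v * FreeGroup.of CSgen.b)
    (y := FreeGroup.of CSgen.b * FreeGroup.of CSgen.v) (by simp [csRels])
  simp only [map_mul] at h
  exact h

lemma buv_cube : (gb * gu * gv) ^ 3 = 1 := by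
  have h := PresentedGroup.one_of_mem (rels := csRels)
    (x := (FreeGroup.of CSgen.b * FreeGroup.of CSgen.u * FreeGroup.of CSgen.v) ^ 3)
    (by simp [csRels])
  simp only [map_pow, map_mul] at h
  exact h

lemma buvu_sq : (gb * gu * gv * gu) ^ 2 * gv = 1 := by
  have h := PresentedGroup.one_of_mem (rels := csRels)
    (x := (FreeGroup.of CSgen.b * FreeGroup.of CSgen.u * FreeGroup.of CSgen.v *
      FreeGroup.of CSgen.u) ^ 2 * FreeGroup.of CSgen.v) (by simp [csRels])
  simp only [map_pow, map_mul] at h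
  exact h

lemma gj_eq : gj = gu * gv * gu * gv := by simp only [gj, pow_two, mul_assoc]

lemma gj_eq' : gj = gv * gu * gv * gu := by
  rw [gj, gu_gv_braid]; simp only [pow_two, mul_assoc]

lemma gu_gj : gu * gj = gj * gu := by
  calc gu * gj = gu * (gv * gu * gv * gu) := by rw [← gj_eq']
    _ = gu * gv * gu * gv * gu := by group
    _ = gj * gu := by rw [← gj_eq]

lemma gv_gj : gv * gj = gj * gv := by
  calc gv * gj = gv * (gu * gv * gu * gv) := by rw [← gj_eq]
    _ = gv * gu * gv * gu * gv := by group
    _ = gj * gv := by rw [← gj_eq']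

lemma gv_inv : gv⁻¹ = gv * (gv * gv) := by
  rw [inv_eq_iff_mul_eq_one, ← gv_four]; simp only [pow_succ, pow_zero, one_mul, mul_assoc]

lemma gu_inv : gu⁻¹ = gu * gu := by
  rw [inv_eq_iff_mul_eq_one, ← gu_cube]; simp only [pow_succ, pow_zero, one_mul, mul_assoc]

/-- `uvu = jv⁻¹`. -/
lemma uvu : gu * (gv * gu) = gj * (gv * (gv * gv)) := by
  rw [← gv_inv, eq_mul_inv_iff_mul_eq, gj_eq]; simp only [mul_assoc]

/-- `vuv = ju⁻¹`. -/
lemma vuv : gv * (gu * gv) = gj * (gu * gu) := by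
  rw [← gu_inv, eq_mul_inv_iff_mul_eq, gj_eq']; simp only [mul_assoc]

/-- The twist `v w v = j³ w` for `w = uv⁻¹u`. -/
lemma v_uVu : gv * (gu * gv⁻¹ * gu) * gv = gj ^ 3 * (gu * gv⁻¹ * gu) := by
  have hu : Commute gj gu := gu_gj.symm
  have hv : Commute gj gv := gv_gj.symm
  have e1 : gv * gu = gj * gu⁻¹ * gv⁻¹ := by
    rw [eq_mul_inv_iff_mul_eq, gu_inv, ← vuv]; simp only [mul_assoc]
  have e2 : gu * gv = gv⁻¹ * (gj * gu⁻¹) := by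
    rw [eq_inv_mul_iff_mul_eq, gu_inv, ← vuv]
  have e3 : gv⁻¹ = gj⁻¹ * (gu * (gv * gu)) := by
    rw [eq_inv_mul_iff_mul_eq, uvu, gv_inv]
  have e4 : gu * gv⁻¹ * gu = gj⁻¹ * (gu⁻¹ * gv * gu⁻¹) := by
    rw [e3, gu_inv]
    calc gu * (gj⁻¹ * (gu * (gv * gu))) * gu = (gu * gj⁻¹) * (gu * (gv * gu)) * gu := by group
      _ = (gj⁻¹ * gu) * (gu * (gv * gu)) * gu := by rw [(hu.inv_left).eq]
      _ = _ := by group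
  have e5 : gv⁻¹ * gv⁻¹ * gv⁻¹ = gv := by
    rw [← inv_inj]; simp only [mul_inv_rev, inv_inv]; rw [gv_inv]
  calc gv * (gu * gv⁻¹ * gu) * gv = (gv * gu) * gv⁻¹ * (gu * gv) := by group
    _ = gj * gu⁻¹ * (gv⁻¹ * gv⁻¹ * gv⁻¹) * gj * gu⁻¹ := by rw [e1, e2]; group
    _ = gj * (gu⁻¹ * gv * gj) * gu⁻¹ := by rw [e5]; group
    _ = gj * (gj * (gu⁻¹ * gv)) * gu⁻¹ := by
      rw [((hu.inv_right).mul_right hv).eq]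
    _ = gj ^ 3 * (gj⁻¹ * (gu⁻¹ * gv * gu⁻¹)) := by
      simp only [pow_succ, pow_zero, one_mul, mul_assoc, mul_inv_cancel_left]
    _ = gj ^ 3 * (gu * gv⁻¹ * gu) := by rw [e4]

/-- Iterating the twist `v w v = j³ w` four times gives `v⁴ w v⁴ = j¹² w`, and `v⁴ = 1`. -/
lemma gj_twelve : gj ^ 12 = 1 := by
  have hv : Commute (gj ^ 3) gv := (Commute.pow_left (gv_gj.symm) 3)
  have key : ∀ n : ℕ, gv ^ n * (gu * gv⁻¹ * gu) * gv ^ n = (gj ^ 3) ^ n * (gu * gv⁻¹ * gu) := by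
    intro n
    induction n with
    | zero => simp
    | succ k ih =>
      calc gv ^ (k + 1) * (gu * gv⁻¹ * gu) * gv ^ (k + 1)
          = gv * (gv ^ k * (gu * gv⁻¹ * gu) * gv ^ k) * gv := by
            rw [pow_succ' gv k]; nth_rewrite 2 [← pow_succ']; rw [pow_succ gv k]; group
        _ = (gv * (gj ^ 3) ^ k) * (gu * gv⁻¹ * gu) * gv := by rw [ih]; group
        _ = (gj ^ 3) ^ k * (gv * (gu * gv⁻¹ * gu) * gv) := by
            rw [← (hv.pow_left k).eq]; group
        _ = (gj ^ 3) ^ (k + 1) * (gu * gv⁻¹ * gu) := by rw [v_uVu, pow_succ]; group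
  have h := key 4
  rw [gv_four, one_mul, mul_one, ← pow_mul] at h
  exact (mul_eq_right.mp h.symm)

/-! ### Normal forms in the finite subgroup generated by `u` and `v`

The rules below rewrite words in `u`, `v`, `j` to the form `jᵃ m vᵉ` with
`m ∈ {1, u, vu, v²u, v³u, uv³u}`. Each comes with a version followed by a tail `x`. -/

section rules
variable (x : CS)

lemma r_uj : gu * (gj * x) = gj * (gu * x) := by rw [← mul_assoc, gu_gj, mul_assoc]
lemma r_vj : gv * (gj * x) = gj * (gv * x) := by rw [← mul_assoc, gv_gj, mul_assoc]

lemma r_v4 : gv * (gv * (gv * gv)) = 1 := by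
  rw [← gv_four]; simp only [pow_succ, pow_zero, one_mul, mul_assoc]
lemma r_v4' : gv * (gv * (gv * (gv * x))) = x := by
  have := congrArg (· * x) r_v4
  simpa only [mul_assoc, one_mul] using this

lemma r_j12 : gj * (gj * (gj * (gj * (gj * (gj * (gj * (gj * (gj * (gj * (gj * gj)))))))))) = 1 := by
  rw [← gj_twelve]; simp only [pow_succ, pow_zero, one_mul, mul_assoc]
lemma r_j12' :
    gj * (gj * (gj * (gj * (gj * (gj * (gj * (gj * (gj * (gj * (gj * (gj * x))))))))))) = x := by
  have := congrArg (· * x) r_j12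
  simpa only [mul_assoc, one_mul] using this

lemma r_uu : gu * gu = gj * (gj * (gj * (gj * (gj * (gj * (gj * (gj * (gj * (gj * (gj *
    (gv * (gu * gv)))))))))))) := by
  rw [vuv, r_j12']
lemma r_uu' : gu * (gu * x) = gj * (gj * (gj * (gj * (gj * (gj * (gj * (gj * (gj * (gj * (gj *
    (gv * (gu * (gv * x))))))))))))) := by
  have := congrArg (· * x) r_uu
  simpa only [mul_assoc, one_mul] using this

lemma r_uvu' : gu * (gv * (gu * x)) = gj * (gv * (gv * (gv * x))) := by
  have := congrArg (· * x) uvu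
  simpa only [mul_assoc, one_mul] using this

/-- `uv²u = (uv)(vu) = j²v⁻¹uv⁻¹`. -/
lemma r_uvvu : gu * (gv * (gv * gu)) =
    gj * (gj * (gv * (gv * (gv * (gu * (gv * (gv * gv))))))) := by
  have e1 : gv * gu = gj * gu⁻¹ * gv⁻¹ := by
    rw [eq_mul_inv_iff_mul_eq, gu_inv, ← vuv]; simp only [mul_assoc]
  have e2 : gu * gv = gv⁻¹ * (gj * gu⁻¹) := by
    rw [eq_inv_mul_iff_mul_eq, gu_inv, ← vuv]
  have hu : Commute gj gu := gu_gj.symm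
  have hv : Commute gj gv := gv_gj.symm
  have e3 : gu⁻¹ * gu⁻¹ = gu := by
    rw [← inv_inj]; simp only [mul_inv_rev, inv_inv]; rw [gu_inv]
  calc gu * (gv * (gv * gu)) = (gu * gv) * (gv * gu) := by group
    _ = (gv⁻¹ * gj) * (gu⁻¹ * gj) * gu⁻¹ * gv⁻¹ := by rw [e1, e2]; group
    _ = (gj * gv⁻¹) * (gj * gu⁻¹) * gu⁻¹ * gv⁻¹ := by
      rw [hv.inv_right.eq, hu.inv_right.eq]
    _ = gj * (gv⁻¹ * gj) * (gu⁻¹ * gu⁻¹) * gv⁻¹ := by group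
    _ = gj * (gj * gv⁻¹) * gu * gv⁻¹ := by rw [e3, hv.inv_right.eq]
    _ = _ := by rw [gv_inv]; simp only [mul_assoc]
lemma r_uvvu' : gu * (gv * (gv * (gu * x))) =
    gj * (gj * (gv * (gv * (gv * (gu * (gv * (gv * (gv * x)))))))) := by
  have := congrArg (· * x) r_uvvu
  simpa only [mul_assoc, one_mul] using this

lemma r_vuvvvu : gv * (gu * (gv * (gv * (gv * gu)))) =
    gj * (gj * (gj * (gu * (gv * (gv * (gv * (gu * (gv * (gv * gv))))))))) := by
  have h := v_uVu
  rw [← eq_mul_inv_iff_mul_eq, gv_inv] at h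
  simpa only [pow_succ, pow_zero, one_mul, mul_assoc] using h
lemma r_vuvvvu' : gv * (gu * (gv * (gv * (gv * (gu * x))))) =
    gj * (gj * (gj * (gu * (gv * (gv * (gv * (gu * (gv * (gv * (gv * x)))))))))) := by
  have := congrArg (· * x) r_vuvvvu
  simpa only [mul_assoc, one_mul] using this

end rules

-- Together these rules form a rewriting system for the normal forms `jᵃ m vᵉ`.
attribute [local simp] gu_gj gv_gj r_uj r_vj r_v4 r_v4' r_j12 r_j12' r_uu r_uu' uvu r_uvu' r_uvvu
  r_uvvu' r_vuvvvu r_vuvvvu'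

/-! ### The coset table -/

/-- The six representatives `1, u, vu, v²u, v³u, uv³u` of `⟨u, v⟩` modulo `j` on the left
and `v` on the right. -/
def mid : Fin 6 → CS
  | 0 => 1
  | 1 => gu
  | 2 => gv * gu
  | 3 => gv * (gv * gu)
  | 4 => gv * (gv * (gv * gu))
  | 5 => gu * (gv * (gv * (gv * gu)))

/-- Representatives `1, j⁻¹ub, b` of the double cosets `Π \ G / ⟨u, v⟩`. -/
def sheet : Fin 3 → CS
  | 0 => 1
  | 1 => gj ^ 11 * (gu * gb)
  | 2 => gb

/-- A name for a right coset of `Π`: `(s, a, m, e)` stands for the coset of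
`sheet s * j ^ a * mid m * v ^ e`. There are `864` names. -/
abbrev Node : Type := Fin 3 × Fin 12 × Fin 6 × Fin 4

/-- The coset representative named by a node. -/
def rep (n : Node) : CS :=
  sheet n.1 * (gj ^ (n.2.1 : ℕ) * (mid n.2.2.1 * gv ^ (n.2.2.2 : ℕ)))

/-- The entry `(c, m', e')` at position `4 * m + e` means
`mid m * v ^ e * u = j ^ c * mid m' * v ^ e'`. -/
def uTable : List (Fin 12 × Fin 6 × Fin 4) :=
  [(0, 1, 0), (0, 2, 0), (0, 3, 0), (0, 4, 0),
   (11, 2, 1), (1, 0, 3), (2, 4, 3), (0, 5, 0),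
   (11, 3, 1), (1, 0, 0), (2, 1, 3), (3, 5, 3),
   (11, 4, 1), (1, 0, 1), (2, 2, 3), (6, 5, 2),
   (11, 1, 1), (1, 0, 2), (2, 3, 3), (9, 5, 1),
   (10, 2, 2), (1, 1, 2), (4, 4, 2), (7, 3, 2)]

/-- The entry at position `72 * s + 6 * a + m` encodes the node of the coset
`Π * rep (s, a, m, 0) * b`; a node `(s, a, m, e)` is encoded as `288 * s + 24 * a + 4 * m + e`. -/
def bTable : List ℕ :=
  [576, 625, 126, 166, 658, 670, 434, 406, 477, 450, 820, 348, 128, 179, 217, 461, 643, 379,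
   550, 384, 312, 694, 663, 183, 672, 721, 222, 262, 754, 766, 530, 502, 573, 546, 628, 444,
   224, 275, 25, 557, 739, 475, 358, 480, 408, 790, 759, 279, 768, 817, 30, 70, 850, 862,
   338, 310, 381, 354, 724, 540, 32, 83, 121, 365, 835, 571, 454, 288, 504, 598, 855, 87,
   648, 132, 592, 836, 238, 104, 245, 523, 676, 510, 519, 199, 57, 399, 705, 402, 390, 793,
   195, 620, 805, 21, 207, 147, 744, 228, 688, 644, 46, 200, 53, 331, 772, 318, 327, 7,
   153, 495, 801, 498, 486, 601, 3, 716, 613, 117, 15, 243, 840, 36, 784, 740, 142, 8,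
   149, 427, 580, 414, 423, 103, 249, 303, 609, 306, 294, 697, 99, 812, 709, 213, 111, 51,
   457, 632, 187, 258, 703, 191, 265, 489, 735, 810, 561, 255, 428, 762, 512, 440, 687, 341,
   268, 113, 845, 778, 42, 373, 553, 728, 283, 66, 799, 287, 73, 297, 831, 618, 369, 63,
   524, 858, 320, 536, 783, 437, 76, 209, 653, 586, 138, 469, 361, 824, 91, 162, 607, 95,
   169, 393, 639, 714, 465, 159, 332, 666, 416, 344, 591, 533, 172, 17, 749, 682, 234, 565]

/-- A rank for each entry of `bTable`: entries of rank `0` hold by the choice of generators of `Π`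
and of `sheet`, the others follow from entries of smaller rank and one relator. -/
def rankTable : List ℕ :=
  [0, 11, 11, 0, 10, 7, 11, 9, 11, 9, 9, 11, 11, 11, 2, 11, 10, 10, 8, 11, 2, 5,
   10, 12, 10, 12, 0, 1, 9, 5, 5, 3, 12, 5, 12, 12, 12, 10, 10, 12, 11, 9, 12, 9,
   12, 12, 13, 1, 11, 5, 10, 11, 12, 11, 4, 12, 7, 10, 12, 7, 1, 1, 12, 11, 3, 3,
   13, 0, 11, 12, 3, 0, 11, 13, 2, 9, 2, 11, 1, 12, 8, 5, 7, 12, 3, 8, 10, 12,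
   9, 12, 5, 12, 7, 11, 9, 11, 12, 11, 12, 11, 11, 8, 10, 10, 12, 7, 13, 8, 12, 11,
   12, 12, 12, 12, 10, 12, 7, 12, 8, 12, 10, 11, 7, 12, 8, 12, 10, 12, 12, 10, 12, 4,
   12, 4, 13, 6, 12, 10, 6, 7, 12, 8, 4, 9, 9, 11, 11, 2, 10, 12, 1, 11, 11, 5,
   3, 13, 12, 12, 12, 6, 11, 12, 11, 12, 10, 11, 11, 10, 11, 12, 11, 9, 11, 6, 9, 9,
   11, 11, 11, 4, 11, 11, 11, 13, 13, 11, 13, 11, 13, 12, 12, 11, 12, 12, 10, 12, 12, 6,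
   10, 11, 12, 12, 8, 11, 13, 12, 13, 6, 4, 8, 4, 8, 11, 10, 4, 10]

/-- The rank of the table entry at `n`; it does not depend on the exponent of `v`. -/
def rank (n : Node) : ℕ := rankTable.getD (72 * n.1 + 6 * n.2.1 + n.2.2.1) 0

/-- Right multiplication by `u` on nodes. -/
def stepU (n : Node) : Node :=
  let q := uTable.getD (4 * n.2.2.1 + n.2.2.2) (0, 0, 0)
  (n.1, n.2.1 + q.1, q.2.1, q.2.2)

/-- Right multiplication by `v` on nodes. -/
def stepV (n : Node) : Node := (n.1, n.2.1, n.2.2.1, n.2.2.2 + 1)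

/-- Right multiplication by `b` on nodes; since `v` and `b` commute, the exponent of `v` is
carried along. -/
def stepB (n : Node) : Node :=
  let q := bTable.getD (72 * n.1 + 6 * n.2.1 + n.2.2.1) 0
  (Fin.ofNat 3 (q / 288), Fin.ofNat 12 (q / 24), Fin.ofNat 6 (q / 4), Fin.ofNat 4 q + n.2.2.2)

lemma gv_pow_add (a c : Fin 4) : gv ^ ((a + c : Fin 4) : ℕ) = gv ^ (a : ℕ) * gv ^ (c : ℕ) := by
  rw [Fin.val_add, ← pow_add]; exact (pow_eq_pow_mod _ gv_four).symm

lemma gj_pow_add (a c : Fin 12) : gj ^ ((a + c : Fin 12) : ℕ) = gj ^ (a : ℕ) * gj ^ (c : ℕ) := by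
  rw [Fin.val_add, ← pow_add]; exact (pow_eq_pow_mod _ gj_twelve).symm

lemma rep_stepV (n : Node) : rep n * gv = rep (stepV n) := by
  obtain ⟨s, a, m, e⟩ := n
  simp only [rep, stepV, gv_pow_add, mul_assoc]
  simp

lemma uTable_spec (m : Fin 6) (e : Fin 4) :
    mid m * (gv ^ (e : ℕ) * gu) =
      gj ^ ((uTable.getD (4 * m + e) (0, 0, 0)).1 : ℕ) *
        (mid (uTable.getD (4 * m + e) (0, 0, 0)).2.1 *
          gv ^ ((uTable.getD (4 * m + e) (0, 0, 0)).2.2 : ℕ)) := by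
  fin_cases m <;> fin_cases e <;>
  simp [uTable, mid, pow_succ, mul_assoc]

lemma rep_stepU (n : Node) : rep n * gu = rep (stepU n) := by
  obtain ⟨s, a, m, e⟩ := n
  simp only [rep, stepU, gj_pow_add, mul_assoc, uTable_spec]

/-! ### Completeness of the coset table -/

/-- `x` and `y` lie in the same right coset of `Π`. -/
def SameCoset (x y : CS) : Prop := x * y⁻¹ ∈ PiGrp

lemma SameCoset.refl (x : CS) : SameCoset x x := by simp [SameCoset, PiGrp.one_mem]

lemma SameCoset.of_eq {x y : CS} (h : x = y) : SameCoset x y := h ▸ SameCoset.refl x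

lemma SameCoset.symm {x y : CS} (h : SameCoset x y) : SameCoset y x := by
  have := PiGrp.inv_mem h
  simpa [SameCoset] using this

lemma SameCoset.trans {x y z : CS} (h : SameCoset x y) (k : SameCoset y z) : SameCoset x z := by
  have := PiGrp.mul_mem h k
  simpa [SameCoset, mul_assoc] using this

lemma SameCoset.mul {x y : CS} (h : SameCoset x y) (g : CS) : SameCoset (x * g) (y * g) := by
  simpa [SameCoset, mul_assoc] using h

/-- The entry of `bTable` for the node `n` is correct. -/
def Good (n : Node) : Prop := SameCoset (rep n * gb) (rep (stepB n))

lemma rep_exp (s : Fin 3) (a : Fin 12) (m : Fin 6) (e : Fin 4) :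
    rep (s, a, m, e) = rep (s, a, m, 0) * gv ^ (e : ℕ) := by
  simp [rep, mul_assoc]

/-- Correctness of an entry does not depend on the exponent of `v`, as `v` and `b` commute. -/
lemma good_exp (s : Fin 3) (a : Fin 12) (m : Fin 6) (e e' : Fin 4)
    (h : Good (s, a, m, e)) : Good (s, a, m, e') := by
  have hc : ∀ k : ℕ, gv ^ k * gb = gb * gv ^ k := fun k =>
    (Commute.pow_left (gv_gb_comm : Commute gv gb) k).eq
  have key : ∀ e : Fin 4, rep (s, a, m, e) * gb = rep (s, a, m, 0) * gb * gv ^ (e : ℕ) := by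
    intro e; rw [rep_exp, mul_assoc, hc, mul_assoc]
  have key' : ∀ e : Fin 4, rep (stepB (s, a, m, e)) =
      rep (stepB (s, a, m, 0)) * gv ^ (e : ℕ) := by
    intro e; simp only [rep, stepB, gv_pow_add, mul_assoc]; simp
  have h1 := h.mul ((gv ^ (e : ℕ))⁻¹ * gv ^ (e' : ℕ))
  rw [key, key'] at h1
  unfold Good
  rw [key, key']
  simpa [mul_assoc] using h1

/-- Right multiplication by `uv`. -/
def stepUV (n : Node) : Node := stepV (stepU n)

lemma rep_stepUV (n : Node) : rep (stepUV n) = rep n * (gu * gv) := by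
  rw [stepUV, ← rep_stepV, ← rep_stepU, mul_assoc]

lemma rep_stepU' (n : Node) : rep (stepU n) = rep n * gu := (rep_stepU n).symm

lemma good_of_bbb {n : Node} (h : stepB (stepB (stepB n)) = n)
    (h1 : Good (stepB n)) (h2 : Good (stepB (stepB n))) : Good n := by
  unfold Good at h1 h2 ⊢
  rw [h] at h2
  have h3 := ((h1.mul gb).trans h2).mul gb
  have : rep (stepB n) * gb * gb * gb = rep (stepB n) := by
    rw [mul_assoc, mul_assoc, ← mul_assoc gb gb gb, ← pow_two, ← pow_succ, gb_cube, mul_one]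
  rw [this] at h3
  exact h3.symm

lemma good_of_buv {n : Node} (h : stepUV (stepB (stepUV (stepB (stepUV (stepB n))))) = n)
    (h1 : Good (stepUV (stepB n))) (h2 : Good (stepUV (stepB (stepUV (stepB n))))) : Good n := by
  unfold Good at h1 h2 ⊢
  have e1 := h1.mul (gu * gv)
  rw [← rep_stepUV] at e1
  have e2 := h2.mul (gu * gv)
  rw [← rep_stepUV, h] at e2
  have h3 := ((e1.mul (gb * (gu * gv))).trans ((SameCoset.of_eq (by group)).trans e2)).mul gb
  rw [rep_stepUV (stepB n)] at h3
  have hr : (gu * gv) * gb * (gu * gv) * (gb * (gu * gv)) * gb = 1 := by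
    have := buv_cube
    have h' : gb⁻¹ * ((gb * gu * gv) ^ 3) * gb = 1 := by rw [this]; group
    rw [← h']; simp only [pow_succ, pow_zero]; group
  refine h3.symm.trans (SameCoset.of_eq ?_)
  calc _ = rep (stepB n) * ((gu * gv) * gb * (gu * gv) * (gb * (gu * gv)) * gb) := by group
    _ = _ := by rw [hr, mul_one]

lemma good_of_buvu {n : Node}
    (h : stepUV (stepUV (stepB (stepU (stepUV (stepB n))))) = n)
    (h1 : Good (stepU (stepUV (stepB n)))) : Good n := by
  unfold Good at h1 ⊢
  have e1 := (h1.mul (gu * gv * (gu * gv)))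
  rw [← mul_assoc (rep (stepB (stepU (stepUV (stepB n))))), ← rep_stepUV, ← rep_stepUV, h] at e1
  have h3 := e1.mul gb
  rw [rep_stepU', rep_stepUV] at h3
  have hr : (gu * gv) * gu * gb * (gu * gv * (gu * gv)) * gb = 1 := by
    have := buvu_sq
    have h' : gb⁻¹ * ((gb * gu * gv * gu) ^ 2 * gv) * gb = 1 := by rw [this]; group
    rw [← h']; simp only [pow_succ, pow_zero]; group
  refine h3.symm.trans (SameCoset.of_eq ?_)
  calc _ = rep (stepB n) * ((gu * gv) * gu * gb * (gu * gv * (gu * gv)) * gb) := by group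
    _ = _ := by rw [hr, mul_one]

/-- The entry at `n` follows from entries of smaller rank by reading one of the relators
`b³`, `(buv)³`, `(buvu)²v` from `n`. -/
def Justified (n : Node) : Prop :=
  (stepB (stepB (stepB n)) = n ∧ rank (stepB n) < rank n ∧ rank (stepB (stepB n)) < rank n) ∨
  (stepUV (stepB (stepUV (stepB (stepUV (stepB n))))) = n ∧
    rank (stepUV (stepB n)) < rank n ∧ rank (stepUV (stepB (stepUV (stepB n)))) < rank n) ∨
  (stepUV (stepUV (stepB (stepU (stepUV (stepB n))))) = n ∧
    rank (stepU (stepUV (stepB n))) < rank n)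

instance (n : Node) : Decidable (Justified n) := by unfold Justified; infer_instance

/-- Every entry of `bTable` is a base entry or is justified for some exponent of `v`. Two base
entries name `sheet 1` and `sheet 2`; the other three come from `a₁`, `a₂`, `a₃`. -/
lemma table_check : ∀ (s : Fin 3) (a : Fin 12) (m : Fin 6),
    (s, a, m) ∈ ([(0, 11, 1), (0, 0, 0), (0, 4, 2), (0, 0, 3), (0, 11, 5)] :
      List (Fin 3 × Fin 12 × Fin 6)) ∨ ∃ e : Fin 4, Justified (s, a, m, e) := by
  decide +kernel

lemma good_x1 : Good (0, 11, 1, 0) := by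
  apply SameCoset.of_eq
  have : stepB (0, 11, 1, 0) = (1, 0, 0, 0) := by decide +kernel
  rw [this]
  simp [rep, sheet, mid, mul_assoc]

lemma good_x2 : Good (0, 0, 0, 0) := by
  apply SameCoset.of_eq
  have : stepB (0, 0, 0, 0) = (2, 0, 0, 0) := by decide +kernel
  rw [this]
  simp [rep, sheet, mid]

/-- If `k b l` is one of the generators of `Π`, then `k b` and `l⁻¹` lie in the same coset. -/
lemma good_of_gen {n : Node} {k l g : CS} (hg : g ∈ PiGrp) (h : g = k * gb * l)
    (h1 : rep n = k) (h2 : rep (stepB n) * l = 1) : Good n := by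
  unfold Good SameCoset
  rw [h1, ← eq_inv_of_mul_eq_one_right h2, ← h]
  exact hg

lemma good_a1 : Good (0, 4, 2, 3) := by
  refine good_of_gen (k := gv * gu * gv⁻¹ * gj ^ 4) (l := gu * gv * gj ^ 2) a1_mem
    (by rw [a1]; simp only [mul_assoc]) ?_ ?_
  · simp only [rep, sheet, mid, gv_inv]
    simp [pow_succ, mul_assoc]
  · have : stepB (0, 4, 2, 3) = (0, 9, 1, 1) := by decide +kernel
    rw [this]
    simp [rep, sheet, mid, pow_succ, mul_assoc]

lemma good_a2 : Good (0, 0, 3, 0) := by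
  refine good_of_gen (k := gv ^ 2 * gu) (l := gu * gv⁻¹ * gu * gv ^ 2 * gj) a2_mem
    (by rw [a2]; simp only [mul_assoc]) ?_ ?_
  · simp [rep, sheet, mid, pow_succ, mul_assoc]
  · have : stepB (0, 0, 3, 0) = (0, 6, 5, 2) := by decide +kernel
    rw [this, gv_inv]
    simp [rep, sheet, mid, pow_succ, mul_assoc]

lemma good_a3 : Good (0, 11, 5, 3) := by
  refine good_of_gen (k := gu⁻¹ * gv ^ 2 * gu * gj ^ 9) (l := gv⁻¹ * gu * gv⁻¹ * gj ^ 8) a3_mem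
    (by rw [a3]; simp only [mul_assoc]) ?_ ?_
  · rw [gu_inv]
    simp [rep, sheet, mid, pow_succ, mul_assoc]
  · have : stepB (0, 11, 5, 3) = (0, 3, 3, 2) := by decide +kernel
    rw [this, gv_inv]
    simp [rep, sheet, mid, pow_succ, mul_assoc]

lemma good_of_rank_lt (k : ℕ) : ∀ n : Node, rank n < k → Good n := by
  induction k with
  | zero => intro n h; omega
  | succ k ih =>
    rintro ⟨s, a, m, e⟩ hk
    rcases table_check s a m with h | ⟨e', h⟩
    · simp only [List.mem_cons, List.not_mem_nil, or_false, Prod.mk.injEq] at h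
      rcases h with ⟨rfl, rfl, rfl⟩ | ⟨rfl, rfl, rfl⟩ | ⟨rfl, rfl, rfl⟩ | ⟨rfl, rfl, rfl⟩ |
        ⟨rfl, rfl, rfl⟩
      · exact good_exp _ _ _ _ _ good_x1
      · exact good_exp _ _ _ _ _ good_x2
      · exact good_exp _ _ _ _ _ good_a1
      · exact good_exp _ _ _ _ _ good_a2
      · exact good_exp _ _ _ _ _ good_a3
    · apply good_exp _ _ _ e'
      have hk' : rank (s, a, m, e') ≤ k := Nat.lt_succ_iff.mp hk
      rcases h with ⟨h0, h1, h2⟩ | ⟨h0, h1, h2⟩ | ⟨h0, h1⟩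
      · exact good_of_bbb h0 (ih _ (by omega)) (ih _ (by omega))
      · exact good_of_buv h0 (ih _ (by omega)) (ih _ (by omega))
      · exact good_of_buvu h0 (ih _ (by omega))

lemma good (n : Node) : Good n := good_of_rank_lt _ n (Nat.lt_succ_self _)

/-- The listed cosets exhaust `G`: their union contains `1` and is stable under right
multiplication by `u`, `v` and `b`. -/
lemma exists_rep (g : CS) : ∃ n : Node, SameCoset g (rep n) := by
  -- The elements which, with their inverses, send listed cosets to listed cosets.
  let H : Subgroup CS :=
    { carrier := {g | (∀ n, ∃ n', SameCoset (rep n * g) (rep n')) ∧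
        ∀ n, ∃ n', SameCoset (rep n * g⁻¹) (rep n')}
      one_mem' := ⟨fun n => ⟨n, .of_eq (by simp)⟩, fun n => ⟨n, .of_eq (by simp)⟩⟩
      mul_mem' := by
        rintro x y ⟨hx, hx'⟩ ⟨hy, hy'⟩
        refine ⟨fun n => ?_, fun n => ?_⟩
        · obtain ⟨p, hp⟩ := hx n
          obtain ⟨q, hq⟩ := hy p
          exact ⟨q, ((SameCoset.of_eq (mul_assoc _ _ _).symm).trans (hp.mul y)).trans hq⟩
        · obtain ⟨p, hp⟩ := hy' n
          obtain ⟨q, hq⟩ := hx' p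
          exact ⟨q, ((SameCoset.of_eq (by group)).trans (hp.mul x⁻¹)).trans hq⟩
      inv_mem' := by
        rintro x ⟨hx, hx'⟩
        exact ⟨hx', by simpa using hx⟩ }
  -- The inverse of an element of finite order is one of its powers.
  have fin : ∀ (x : CS) (k : ℕ), x ^ (k + 1) = 1 →
      (∀ n, ∃ n', SameCoset (rep n * x) (rep n')) → x ∈ H := by
    intro x k hk hx
    have hp : ∀ (l : ℕ) (n : Node), ∃ n', SameCoset (rep n * x ^ l) (rep n') := by
      intro l
      induction l with
      | zero => exact fun n => ⟨n, .of_eq (by simp)⟩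
      | succ l ih =>
        intro n
        obtain ⟨p, hp⟩ := ih n
        obtain ⟨q, hq⟩ := hx p
        exact ⟨q, ((SameCoset.of_eq (by rw [pow_succ, mul_assoc])).trans (hp.mul x)).trans hq⟩
    refine ⟨hx, fun n => ?_⟩
    have : x⁻¹ = x ^ k := by
      rw [inv_eq_iff_mul_eq_one, ← pow_succ', hk]
    rw [this]
    exact hp k n
  have hH : ∀ x : CSgen, (PresentedGroup.of x : CS) ∈ H := by
    rintro (_ | _ | _)
    · exact fin gu 2 gu_cube fun n => ⟨_, .of_eq (rep_stepU n)⟩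
    · exact fin gv 3 gv_four fun n => ⟨_, .of_eq (rep_stepV n)⟩
    · exact fin gb 2 gb_cube fun n => ⟨_, good n⟩
  have hg : g ∈ H := PresentedGroup.generated_by csRels H hH g
  obtain ⟨n, hn⟩ := hg.1 (0, 0, 0, 0)
  refine ⟨n, (SameCoset.of_eq ?_).trans hn⟩
  simp [rep, sheet, mid]

/-! ### A finite quotient

`G` acts on `31` points. On the points `0, …, 27` the image of `G` is `PSU(3, 3)` in its
doubly transitive action; the points `28, 29, 30` carry the action of the abelianization,
cyclic of order `3`. -/

/-- The images of the points `0, …, 30` under `u`. -/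
def listU : List (Fin 31) :=
  [2, 14, 6, 16, 3, 8, 0, 20, 19, 18, 9, 1, 15, 12, 11, 13, 4, 7, 10, 5, 17, 23, 26, 27, 24, 22, 25, 21, 29, 30, 28]
/-- The images of the points `0, …, 30` under `v`. -/
def listV : List (Fin 31) :=
  [5, 4, 1, 0, 15, 7, 16, 3, 13, 6, 8, 10, 17, 11, 12, 2, 21, 23, 18, 19, 20, 9, 25, 14, 26, 24, 22, 27, 28, 29, 30]
/-- The images of the points `0, …, 30` under `b`. -/
def listB : List (Fin 31) :=
  [1, 8, 10, 2, 13, 4, 22, 15, 0, 26, 3, 7, 6, 5, 9, 11, 25, 16, 20, 18, 19, 24, 12, 21, 23, 17, 14, 27, 29, 30, 28]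

/-- The permutation by which `u` acts. -/
def permU : Equiv.Perm (Fin 31) where
  toFun i := listU.getD i 0
  invFun i := listU.getD (listU.getD i 0) 0
  left_inv := by unfold Function.LeftInverse; decide +kernel
  right_inv := by unfold Function.RightInverse Function.LeftInverse; decide +kernel

/-- The permutation by which `v` acts. -/
def permV : Equiv.Perm (Fin 31) where
  toFun i := listV.getD i 0
  invFun i := listV.getD (listV.getD (listV.getD i 0) 0) 0
  left_inv := by unfold Function.LeftInverse; decide +kernel
  right_inv := by unfold Function.RightInverse Function.LeftInverse; decide +kernel

/-- The permutation by which `b` acts. -/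
def permB : Equiv.Perm (Fin 31) where
  toFun i := listB.getD i 0
  invFun i := listB.getD (listB.getD i 0) 0
  left_inv := by unfold Function.LeftInverse; decide +kernel
  right_inv := by unfold Function.RightInverse Function.LeftInverse; decide +kernel

/-- The action of the three generators. -/
def permGen : CSgen → Equiv.Perm (Fin 31)
  | .u => permU
  | .v => permV
  | .b => permB

lemma permGen_rels : ∀ r ∈ csRels, FreeGroup.lift permGen r = 1 := by
  intro r hr
  simp only [csRels, Set.mem_insert_iff, Set.mem_singleton_iff] at hr
  rcases hr with rfl | rfl | rfl | rfl | rfl | rfl | rfl <;>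
  simp only [map_mul, map_pow, map_inv, FreeGroup.lift_apply_of, permGen] <;>
  decide +kernel

/-- The action of `G` on `31` points. -/
def toPerm : CS →* Equiv.Perm (Fin 31) := PresentedGroup.toGroup permGen_rels

lemma toPerm_u : toPerm gu = permU := PresentedGroup.toGroup.of permGen_rels
lemma toPerm_v : toPerm gv = permV := PresentedGroup.toGroup.of permGen_rels
lemma toPerm_b : toPerm gb = permB := PresentedGroup.toGroup.of permGen_rels

/-- The permutation by which `j` acts. -/
def permJ : Equiv.Perm (Fin 31) := permU * permV * permU * permV

lemma toPerm_j : toPerm gj = permJ := by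
  simp only [gj_eq, map_mul, toPerm_u, toPerm_v, permJ]

/-- The image of `a₁`, of order `3`. -/
def permD : Equiv.Perm (Fin 31) :=
  permV * permU * permV⁻¹ * permJ ^ 4 * permB * permU * permV * permJ ^ 2

/-- The image of `a₂`, of order `7`. -/
def permC : Equiv.Perm (Fin 31) :=
  permV ^ 2 * permU * permB * permU * permV⁻¹ * permU * permV ^ 2 * permJ

lemma toPerm_a1 : toPerm a1 = permD := by
  simp only [a1, map_mul, map_pow, map_inv, toPerm_u, toPerm_v, toPerm_b, toPerm_j, permD]

lemma toPerm_a2 : toPerm a2 = permC := by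
  simp only [a2, map_mul, map_pow, map_inv, toPerm_u, toPerm_v, toPerm_b, toPerm_j, permC]

lemma toPerm_a3 : toPerm a3 = permC⁻¹ := by
  simp only [a3, map_mul, map_pow, map_inv, toPerm_u, toPerm_v, toPerm_b, toPerm_j, permC]
  decide +kernel

/-- The `21` permutations `cⁱdᵏ`, with `c` and `d` the images of `a₂` and `a₁`. -/
def InA (x : Equiv.Perm (Fin 31)) : Prop :=
  ∃ (i : Fin 7) (k : Fin 3), x = permC ^ (i : ℕ) * permD ^ (k : ℕ)

instance (x : Equiv.Perm (Fin 31)) : Decidable (InA x) := by unfold InA; infer_instance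

/-- The set of permutations `cⁱdᵏ` is stable under left multiplication by `c`, `d` and their
inverses. -/
lemma inA_mul : ∀ (i : Fin 7) (k : Fin 3),
    InA (permC * (permC ^ (i : ℕ) * permD ^ (k : ℕ))) ∧
    InA (permC⁻¹ * (permC ^ (i : ℕ) * permD ^ (k : ℕ))) ∧
    InA (permD * (permC ^ (i : ℕ) * permD ^ (k : ℕ))) ∧
    InA (permD⁻¹ * (permC ^ (i : ℕ) * permD ^ (k : ℕ))) := by
  decide +kernel

lemma inA_of_mem {g : CS} (hg : g ∈ PiGrp) : InA (toPerm g) := by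
  induction hg using Subgroup.closure_induction_left with
  | one => exact ⟨0, 0, by simp⟩
  | mul_left x hx y _ ih =>
    obtain ⟨i, k, h⟩ := ih
    obtain ⟨h1, h2, h3, h4⟩ := inA_mul i k
    rw [map_mul, h]
    rcases hx with rfl | rfl | rfl
    · rw [toPerm_a1]; exact h3
    · rw [toPerm_a2]; exact h1
    · rw [toPerm_a3]; exact h2
  | inv_mul_cancel x hx y _ ih =>
    obtain ⟨i, k, h⟩ := ih
    obtain ⟨h1, h2, h3, h4⟩ := inA_mul i k
    rw [map_mul, map_inv, h]
    rcases hx with rfl | rfl | rfl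
    · rw [toPerm_a1]; exact h4
    · rw [toPerm_a2]; exact h2
    · rw [toPerm_a3, inv_inv]; exact h1

/-- No permutation `cⁱdᵏ` other than the identity commutes with the image of `v`. -/
lemma inA_commute : ∀ (i : Fin 7) (k : Fin 3),
    permV * (permC ^ (i : ℕ) * permD ^ (k : ℕ)) = permC ^ (i : ℕ) * permD ^ (k : ℕ) * permV →
    permC ^ (i : ℕ) * permD ^ (k : ℕ) = 1 := by
  decide +kernel

/-- A set of points stable under all `cⁱdᵏ`: seven of the first `28` points and the point `28`. -/
def fixedSet : List (Fin 31) := [5, 7, 16, 18, 20, 21, 23, 28]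

lemma inA_fixedSet : ∀ (i : Fin 7) (k : Fin 3), ∀ p ∈ fixedSet,
    (permC ^ (i : ℕ) * permD ^ (k : ℕ)) p ∈ fixedSet := by
  decide +kernel

/-- The images of `mid m`. -/
def permMid : Fin 6 → Equiv.Perm (Fin 31)
  | 0 => 1
  | 1 => permU
  | 2 => permV * permU
  | 3 => permV * (permV * permU)
  | 4 => permV * (permV * (permV * permU))
  | 5 => permU * (permV * (permV * (permV * permU)))

/-- The images of `sheet s`. -/
def permSheet : Fin 3 → Equiv.Perm (Fin 31)
  | 0 => 1
  | 1 => permJ ^ 11 * (permU * permB)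
  | 2 => permB

lemma toPerm_mid (m : Fin 6) : toPerm (mid m) = permMid m := by
  fin_cases m <;> simp only [mid, permMid, map_mul, map_one, toPerm_u, toPerm_v]

lemma toPerm_sheet (s : Fin 3) : toPerm (sheet s) = permSheet s := by
  fin_cases s <;>
  simp only [sheet, permSheet, map_mul, map_one, map_pow, toPerm_u, toPerm_b, toPerm_j]

/-- Of the `864` coset representatives, only `1` maps `fixedSet` into itself. -/
lemma fixedSet_check : ∀ (s : Fin 3) (a : Fin 12) (m : Fin 6) (e : Fin 4),
    (∀ p ∈ fixedSet, permSheet s ((permJ ^ (a : ℕ)) (permMid m ((permV ^ (e : ℕ)) p))) ∈ fixedSet) →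
    s = 0 ∧ a = 0 ∧ m = 0 ∧ e = 0 := by
  decide +kernel

/-- `Π` contains the kernel of the action: an element `g` of the kernel in the coset of `rep n`
forces the image of `rep n` to be some `cⁱdᵏ`, so `rep n` preserves `fixedSet` and is `1`. -/
lemma mem_of_toPerm_eq_one {g : CS} (hg : toPerm g = 1) : g ∈ PiGrp := by
  obtain ⟨⟨s, a, m, e⟩, hn⟩ := exists_rep g
  obtain ⟨i, k, h⟩ := inA_of_mem hn.symm
  rw [map_mul, map_inv, hg, inv_one, mul_one] at h
  have hp : toPerm (rep (s, a, m, e)) =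
      permSheet s * (permJ ^ (a : ℕ) * (permMid m * permV ^ (e : ℕ))) := by
    simp only [rep, map_mul, map_pow, toPerm_sheet, toPerm_mid, toPerm_j, toPerm_v]
  obtain ⟨rfl, rfl, rfl, rfl⟩ := fixedSet_check s a m e fun p hmem => by
    have := inA_fixedSet i k p hmem
    rw [← h, hp] at this
    exact this
  simpa [SameCoset, rep, sheet, mid] using hn

/-- `v` is central in `G₀`. -/
lemma gv_comm_of_mem {g : CS} (hg : g ∈ G0) : gv * g = g * gv := by
  have : G0 ≤ Subgroup.centralizer {gv} := by
    have h1 : gb ∈ Subgroup.centralizer {gv} := by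
      rw [Subgroup.mem_centralizer_singleton_iff]; exact gv_gb_comm.symm
    have h2 : gj ∈ Subgroup.centralizer {gv} := by
      rw [Subgroup.mem_centralizer_singleton_iff]; exact gv_gj.symm
    have h3 : gv ∈ Subgroup.centralizer {gv} := by
      rw [Subgroup.mem_centralizer_singleton_iff]
    refine (Subgroup.closure_le _).mpr ?_
    rintro x (rfl | rfl | rfl | rfl)
    · exact inv_mem (mul_mem h2 h1)
    · exact h1
    · exact h2
    · exact h3
  exact (Subgroup.mem_centralizer_singleton_iff.mp (this hg)).symm

/-- `Π ∩ G₀` acts trivially. -/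
lemma toPerm_eq_one {g : CS} (hg : g ∈ PiGrp ⊓ G0) : toPerm g = 1 := by
  obtain ⟨i, k, h⟩ := inA_of_mem hg.1
  have hc := congrArg toPerm (gv_comm_of_mem hg.2)
  rw [map_mul, map_mul, toPerm_v, h] at hc
  rw [h]
  exact inA_commute i k hc

/-- for every `h ∈ G`, `h(Π ∩ G₀)h⁻¹ ⊆ Π`; in particular
`h(Π ∩ G₀)h⁻¹ = Π ∩ G₀` for every `h ∈ G₀`. -/
theorem stmt_15 :
    (∀ h : CS, Subgroup.map (MulAut.conj h).toMonoidHom (PiGrp ⊓ G0) ≤ PiGrp) ∧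
    (∀ h ∈ G0, Subgroup.map (MulAut.conj h).toMonoidHom (PiGrp ⊓ G0) = PiGrp ⊓ G0) := by
  have key : ∀ h : CS, Subgroup.map (MulAut.conj h).toMonoidHom (PiGrp ⊓ G0) ≤ PiGrp := by
    rintro h _ ⟨g, hg, rfl⟩
    apply mem_of_toPerm_eq_one
    simp [toPerm_eq_one hg]
  have le : ∀ h ∈ G0,
      Subgroup.map (MulAut.conj h).toMonoidHom (PiGrp ⊓ G0) ≤ PiGrp ⊓ G0 := by
    intro h hh
    refine le_inf (key h) ?_
    rintro _ ⟨g, hg, rfl⟩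
    exact mul_mem (mul_mem hh hg.2) (inv_mem hh)
  refine ⟨key, fun h hh => le_antisymm (le h hh) fun g hg => ?_⟩
  refine ⟨h⁻¹ * g * h, ?_, by simp [mul_assoc]⟩
  have := le h⁻¹ (inv_mem hh) ⟨g, hg, rfl⟩
  simpa using this
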